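/- arXiv:1701.02522 — 8 statements merged into one kernel-verified Lean document; each statement's English description precedes it below -/
import Mathlib

section
/- Let N be a positive integer and let A⁰ and A¹ be the (N+1)×(N+1) isomerisation matrices. Then the matrix commutator satisfies [A⁰, A¹] = A⁰A¹ − A¹A⁰ = −2·A¹. -/
/-- The isomerisation matrix `A⁰`: an `(N+1)×(N+1)` real matrix with
`A⁰_{k,ℓ} = -N` if `k = ℓ`, `ℓ` if `k = ℓ-1`, `N-ℓ` if `k = ℓ+1`, and `0` otherwise. -/
def isoA0 (N : ℕ) : Matrix (Fin (N+1)) (Fin (N+1)) ℝ := fun k l =>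
  if (k : ℕ) = (l : ℕ) then -(N : ℝ)
  else if (k : ℕ) + 1 = (l : ℕ) then ((l : ℕ) : ℝ)
  else if (k : ℕ) = (l : ℕ) + 1 then (N : ℝ) - ((l : ℕ) : ℝ)
  else 0

/-- The isomerisation matrix `A¹`: an `(N+1)×(N+1)` real matrix with
`A¹_{k,ℓ} = N-2ℓ` if `k = ℓ`, `ℓ` if `k = ℓ-1`, `-N+ℓ` if `k = ℓ+1`, and `0` otherwise. -/
def isoA1 (N : ℕ) : Matrix (Fin (N+1)) (Fin (N+1)) ℝ := fun k l =>
  if (k : ℕ) = (l : ℕ) then (N : ℝ) - 2 * ((l : ℕ) : ℝ)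
  else if (k : ℕ) + 1 = (l : ℕ) then ((l : ℕ) : ℝ)
  else if (k : ℕ) = (l : ℕ) + 1 then -(N : ℝ) + ((l : ℕ) : ℝ)
  else 0

/-!
Let `V` be the space of homogeneous polynomials of degree `N` in `x` and `y`. On the basis
`x ^ (N - ℓ) * y ^ ℓ`, the operators `E = x ∂/∂y`, `F = y ∂/∂x` and `H = x ∂/∂x - y ∂/∂y` form an
`𝔰𝔩₂`-triple, and `A⁰ = E + F - N`, `A¹ = H + E - F`. The scalar `N` is central, so
`[A⁰, A¹] = [E, H] + [F, H] - 2 [E, F] = -2 E + 2 F - 2 H = -2 A¹`.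
-/

open Matrix

theorem lie_add_add_sub_of_isSl2Triple {L : Type*} [LieRing L] {h e f : L}
    (t : IsSl2Triple h e f) :
    ⁅e + f, h + e - f⁆ = -(2 • (h + e - f)) := by
  have lie_e_h : ⁅e, h⁆ = -(2 • e) := by rw [← lie_skew, t.lie_h_e_nsmul]
  have lie_f_h : ⁅f, h⁆ = 2 • f := by rw [← lie_skew, t.lie_h_f_nsmul, neg_neg]
  have lie_f_e : ⁅f, e⁆ = -h := by rw [← lie_skew, t.lie_e_f]
  simp only [add_lie, lie_add, lie_sub, lie_self, lie_e_h, lie_f_h, lie_f_e, t.lie_e_f]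
  abel

section OffDiagonal

variable {R : Type*} {n : ℕ}

/-- The `n × n` matrix with entry `a k` at `(k, k + 1)` and zeros elsewhere. Indexing the weights
by `ℕ` avoids shifts between `Fin` types; the values `a k` with `n ≤ k + 1` do not occur. -/
def superdiagonal [Zero R] (n : ℕ) (a : ℕ → R) : Matrix (Fin n) (Fin n) R :=
  of fun i j => if (i : ℕ) + 1 = j then a i else 0

/-- The `n × n` matrix with entry `b k` at `(k + 1, k)` and zeros elsewhere, the counterpart of
`superdiagonal` below the diagonal. -/
def subdiagonal [Zero R] (n : ℕ) (b : ℕ → R) : Matrix (Fin n) (Fin n) R :=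
  of fun i j => if (i : ℕ) = j + 1 then b j else 0

-- The last row of the product is zero, which `p n = 0` makes an instance of the general formula.
theorem superdiagonal_mul_subdiagonal [NonUnitalNonAssocSemiring R] {a b p : ℕ → R}
    (hp : ∀ k, a k * b k = p (k + 1)) (hpn : p n = 0) :
    superdiagonal n a * subdiagonal n b = diagonal fun i : Fin n => p (i + 1) := by
  ext i j
  rw [mul_apply, diagonal_apply]
  simp only [superdiagonal, subdiagonal, of_apply, ite_mul, mul_ite, zero_mul, mul_zero]
  by_cases hi : (i : ℕ) + 1 < n
  · rw [Finset.sum_eq_single ⟨i + 1, hi⟩ (by grind) (by simp)]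
    grind
  · have last_row : (i : ℕ) + 1 = n := by omega
    rw [Finset.sum_eq_zero (by grind), last_row, hpn, ite_self]

theorem subdiagonal_mul_superdiagonal [NonUnitalNonAssocSemiring R] {a b p : ℕ → R}
    (hp : ∀ k, b k * a k = p (k + 1)) (hp0 : p 0 = 0) :
    subdiagonal n b * superdiagonal n a = diagonal fun i : Fin n => p i := by
  ext i j
  rw [mul_apply, diagonal_apply]
  simp only [superdiagonal, subdiagonal, of_apply, ite_mul, mul_ite, zero_mul, mul_zero]
  rcases hi : (i : ℕ) with _ | k
  · rw [Finset.sum_eq_zero (by grind), hp0, ite_self]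
  · rw [Finset.sum_eq_single ⟨k, by omega⟩ (by grind) (by simp)]
    grind

variable [CommRing R]

theorem lie_superdiagonal_subdiagonal {a b p : ℕ → R}
    (hp : ∀ k, a k * b k = p (k + 1)) (hp0 : p 0 = 0) (hpn : p n = 0) :
    ⁅superdiagonal n a, subdiagonal n b⁆ = diagonal fun i : Fin n => p (i + 1) - p i := by
  rw [Ring.lie_def, superdiagonal_mul_subdiagonal hp hpn,
    subdiagonal_mul_superdiagonal (fun k => (mul_comm _ _).trans (hp k)) hp0, diagonal_sub]

theorem lie_diagonal_superdiagonal {d : ℕ → R} {c : R} (hd : ∀ k, d k - d (k + 1) = c)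
    (a : ℕ → R) :
    ⁅diagonal fun i : Fin n => d i, superdiagonal n a⁆ = c • superdiagonal n a := by
  ext i j
  simp only [Ring.lie_def, Matrix.sub_apply, diagonal_mul, mul_diagonal, Matrix.smul_apply,
    smul_eq_mul, superdiagonal, of_apply]
  split_ifs with hij
  · rw [← hij, ← hd i]
    ring
  · ring

theorem lie_diagonal_subdiagonal {d : ℕ → R} {c : R} (hd : ∀ k, d k - d (k + 1) = c)
    (b : ℕ → R) :
    ⁅diagonal fun i : Fin n => d i, subdiagonal n b⁆ = -(c • subdiagonal n b) := by
  ext i j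
  simp only [Ring.lie_def, Matrix.sub_apply, diagonal_mul, mul_diagonal, Matrix.neg_apply,
    Matrix.smul_apply, smul_eq_mul, subdiagonal, of_apply]
  split_ifs with hij
  · rw [hij, ← hd j]
    ring
  · ring

end OffDiagonal

attribute [local instance] LieRing.ofAssociativeRing

section Sl2

variable (R : Type*) [CommRing R] (N : ℕ)

/-- The operator `H = x ∂/∂x - y ∂/∂y` on homogeneous polynomials of degree `N`, in the basis
`x ^ (N - ℓ) * y ^ ℓ`. -/
def sl2Weight : Matrix (Fin (N + 1)) (Fin (N + 1)) R :=
  diagonal fun i => (N : R) - 2 * (i : ℕ)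

/-- The operator `E = x ∂/∂y` on homogeneous polynomials of degree `N`, in the basis
`x ^ (N - ℓ) * y ^ ℓ`. -/
def sl2Raising : Matrix (Fin (N + 1)) (Fin (N + 1)) R :=
  superdiagonal (N + 1) fun k => ((k + 1 : ℕ) : R)

/-- The operator `F = y ∂/∂x` on homogeneous polynomials of degree `N`, in the basis
`x ^ (N - ℓ) * y ^ ℓ`. -/
def sl2Lowering : Matrix (Fin (N + 1)) (Fin (N + 1)) R :=
  subdiagonal (N + 1) fun k => (N : R) - k

theorem sl2Raising_apply (i j : Fin (N + 1)) :
    sl2Raising R N i j = if (i : ℕ) + 1 = j then ((j : ℕ) : R) else 0 := by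
  rw [sl2Raising, superdiagonal, of_apply]
  split_ifs with hij
  · rw [hij]
  · rfl

theorem lie_sl2Raising_sl2Lowering : ⁅sl2Raising R N, sl2Lowering R N⁆ = sl2Weight R N := by
  let p (k : ℕ) : R := k * (N + 1 - k)
  have hp (k : ℕ) : ((k + 1 : ℕ) : R) * (N - k) = p (k + 1) := by
    simp only [p]
    push_cast
    ring
  rw [sl2Raising, sl2Lowering, sl2Weight,
    lie_superdiagonal_subdiagonal hp (by simp [p]) (by simp [p])]
  congr 1
  ext i
  simp only [p]
  push_cast
  ring

variable {R N}

theorem isSl2Triple_sl2Weight (hN : (N : R) ≠ 0) :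
    IsSl2Triple (sl2Weight R N) (sl2Raising R N) (sl2Lowering R N) := by
  have weight_step (k : ℕ) : ((N : R) - 2 * k) - (N - 2 * (k + 1 : ℕ)) = 2 := by
    push_cast
    ring
  refine ⟨fun weight_eq_zero => hN ?_, lie_sl2Raising_sl2Lowering R N, ?_, ?_⟩
  · simpa [sl2Weight] using congr_fun₂ weight_eq_zero 0 0
  · rw [← ofNat_smul_eq_nsmul R]
    exact lie_diagonal_superdiagonal (d := fun k => (N : R) - 2 * k) weight_step _
  · rw [← ofNat_smul_eq_nsmul R]
    exact lie_diagonal_subdiagonal (d := fun k => (N : R) - 2 * k) weight_step _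

end Sl2

theorem isoA0_eq_add_sub_natCast (N : ℕ) :
    isoA0 N = sl2Raising ℝ N + sl2Lowering ℝ N - (N : Matrix (Fin (N + 1)) (Fin (N + 1)) ℝ) := by
  ext k l
  simp only [isoA0, sl2Raising_apply, sl2Lowering, subdiagonal, Matrix.sub_apply,
    Matrix.add_apply, of_apply, Matrix.natCast_apply, Fin.ext_iff]
  split_ifs <;> grind

theorem isoA1_eq_add_sub (N : ℕ) :
    isoA1 N = sl2Weight ℝ N + sl2Raising ℝ N - sl2Lowering ℝ N := by
  ext k l
  simp only [isoA1, sl2Weight, sl2Raising_apply, sl2Lowering, subdiagonal,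
    Matrix.sub_apply, Matrix.add_apply, of_apply, diagonal_apply, Fin.ext_iff]
  split_ifs <;> grind

theorem commutator_isoA0_isoA1 (N : ℕ) (hN : 0 < N) :
    isoA0 N * isoA1 N - isoA1 N * isoA0 N = (-2 : ℝ) • isoA1 N := by
  have triple : IsSl2Triple (sl2Weight ℝ N) (sl2Raising ℝ N) (sl2Lowering ℝ N) :=
    isSl2Triple_sl2Weight (Nat.cast_ne_zero.mpr hN.ne')
  have lie_natCast : ⁅(N : Matrix (Fin (N + 1)) (Fin (N + 1)) ℝ), isoA1 N⁆ = 0 :=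
    commute_iff_lie_eq.mp (Nat.cast_commute N _)
  calc
    isoA0 N * isoA1 N - isoA1 N * isoA0 N = ⁅isoA0 N, isoA1 N⁆ := (Ring.lie_def _ _).symm
    _ = ⁅sl2Raising ℝ N + sl2Lowering ℝ N, isoA1 N⁆ := by
      rw [isoA0_eq_add_sub_natCast, sub_lie, lie_natCast, sub_zero]
    _ = -(2 • isoA1 N) := by
      rw [isoA1_eq_add_sub, lie_add_add_sub_of_isSl2Triple triple]
    _ = (-2 : ℝ) • isoA1 N := by
      rw [neg_smul, two_smul, two_smul]
end

section
/- Let N be a positive integer, let A⁰ and A¹ be the (N+1)×(N+1) isomerisation matrices, and let c be a real number with −1 ≤ c ≤ 1. Then the matrix L = A⁰ + c·A¹ is a graph Laplacian: every off-diagonal entry of L is nonnegative (L_{k,ℓ} ≥ 0 whenever k ≠ ℓ), and every column of L sums to zero (for each ℓ, the sum over k of L_{k,ℓ} equals 0). -/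
/-- The generator of the birth–death chain on `0, …, n` with birth rates `b` and death rates `d`,
acting on column vectors: column `l` holds the rates of the jumps out of state `l`. A jump leaving
`0, …, n` has no entry, although `b (Fin.last n)` and `d 0` still count in the diagonal. -/
def birthDeathGenerator {R : Type*} [AddCommGroup R] {n : ℕ} (b d : Fin (n + 1) → R) :
    Matrix (Fin (n + 1)) (Fin (n + 1)) R :=
  Matrix.of fun k l =>
    (if (k : ℕ) = l + 1 then b l else 0) + (if (k : ℕ) + 1 = l then d l else 0)
      - (if k = l then b l + d l else 0)

section SumIte

variable {M : Type*} [AddCommMonoid M] {n : ℕ} {f : Fin (n + 1) → M}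

theorem sum_ite_val_eq_val_add_one (hf : f (Fin.last n) = 0) (l : Fin (n + 1)) :
    ∑ k : Fin (n + 1), (if (k : ℕ) = l + 1 then f l else 0) = f l := by
  cases l using Fin.lastCases with
  | last => simp [hf]
  | cast m =>
    have eq_succ_iff (k : Fin (n + 1)) : (k : ℕ) = m.castSucc + 1 ↔ k = m.succ := by
      simp [Fin.ext_iff]
    simp only [eq_succ_iff, Finset.sum_ite_eq', Finset.mem_univ, if_true]

theorem sum_ite_val_add_one_eq_val (hf : f 0 = 0) (l : Fin (n + 1)) :
    ∑ k : Fin (n + 1), (if (k : ℕ) + 1 = l then f l else 0) = f l := by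
  cases l using Fin.cases with
  | zero => simp [hf]
  | succ m =>
    have eq_castSucc_iff (k : Fin (n + 1)) : (k : ℕ) + 1 = m.succ ↔ k = m.castSucc := by
      simp [Fin.ext_iff]
    simp only [eq_castSucc_iff, Finset.sum_ite_eq', Finset.mem_univ, if_true]

end SumIte

namespace birthDeathGenerator

variable {R : Type*} [AddCommGroup R] {n : ℕ} {b d : Fin (n + 1) → R}

theorem apply_nonneg_of_ne [Preorder R] [AddLeftMono R] {k l : Fin (n + 1)}
    (hb : 0 ≤ b l) (hd : 0 ≤ d l) (hkl : k ≠ l) : 0 ≤ birthDeathGenerator b d k l := by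
  rw [birthDeathGenerator, Matrix.of_apply, if_neg hkl, sub_zero]
  exact add_nonneg (ite_nonneg hb le_rfl) (ite_nonneg hd le_rfl)

theorem sum_apply_eq_zero (hb : b (Fin.last n) = 0) (hd : d 0 = 0) (l : Fin (n + 1)) :
    ∑ k, birthDeathGenerator b d k l = 0 := by
  simp only [birthDeathGenerator, Matrix.of_apply, Finset.sum_sub_distrib,
    Finset.sum_add_distrib, sum_ite_val_eq_val_add_one hb, sum_ite_val_add_one_eq_val hd,
    Finset.sum_ite_eq', Finset.mem_univ, if_true, sub_self]

end birthDeathGenerator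

theorem isoA0_add_smul_isoA1_eq_birthDeathGenerator (N : ℕ) (c : ℝ) :
    isoA0 N + c • isoA1 N =
      birthDeathGenerator (fun l => (1 - c) * ((N : ℝ) - (l : ℕ)))
        (fun l => (1 + c) * ((l : ℕ) : ℝ)) := by
  ext k l
  simp only [Matrix.add_apply, Matrix.smul_apply, smul_eq_mul, isoA0, isoA1,
    birthDeathGenerator, Matrix.of_apply, Fin.ext_iff]
  split_ifs <;> first | omega | ring

/-- For `-1 ≤ c ≤ 1`, the matrix `L = A⁰ + c·A¹` is a graph Laplacian:
nonnegative off-diagonal entries and zero column sums. -/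
theorem isoA0_add_smul_isoA1_isGraphLaplacian (N : ℕ) (hN : 0 < N) (c : ℝ)
    (hc₁ : -1 ≤ c) (hc₂ : c ≤ 1) :
    (∀ k l : Fin (N+1), k ≠ l → 0 ≤ (isoA0 N + c • isoA1 N) k l) ∧
    (∀ l : Fin (N+1), ∑ k : Fin (N+1), (isoA0 N + c • isoA1 N) k l = 0) := by
  rw [isoA0_add_smul_isoA1_eq_birthDeathGenerator]
  refine ⟨fun k l hkl => ?_, birthDeathGenerator.sum_apply_eq_zero (by simp) (by simp)⟩
  have hl : ((l : ℕ) : ℝ) ≤ N := by exact_mod_cast l.is_le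
  have birth_nonneg : 0 ≤ (1 - c) * ((N : ℝ) - (l : ℕ)) :=
    mul_nonneg (sub_nonneg.mpr hc₂) (sub_nonneg.mpr hl)
  have death_nonneg : 0 ≤ (1 + c) * ((l : ℕ) : ℝ) :=
    mul_nonneg (neg_le_iff_add_nonneg'.mp hc₁) (Nat.cast_nonneg _)
  exact birthDeathGenerator.apply_nonneg_of_ne birth_nonneg death_nonneg hkl
end

section
/- For y > 0 define φ(y) = (1 − y − (1+y)e^{−2y}) / ((1 − e^{−2y})(1 − 2y − e^{−2y})), and for 0 < x ≤ t define Θ(t,x) = − exp( −4 ∫ₓᵗ φ(y) dy ) · (1 − 2x − e^{−2x}) / ( x(1 − e^{−2x}) ). Then Θ satisfies the Volterra-type integral equation: for all 0 < x ≤ t, ( t(1 − e^{−2t}) / (1 − 2t − e^{−2t}) ) · Θ(t,x) = ∫ₓᵗ Θ(y,x) dy − 1. -/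
open Real

/-- `φ(y) = (1 − y − (1+y)e^{−2y}) / ((1 − e^{−2y})(1 − 2y − e^{−2y}))`. -/
noncomputable def magnusPhi (y : ℝ) : ℝ :=
  (1 - y - (1 + y) * Real.exp (-2 * y)) /
    ((1 - Real.exp (-2 * y)) * (1 - 2 * y - Real.exp (-2 * y)))

/-- `Θ(t,x) = − exp(−4 ∫ₓᵗ φ(y) dy) · (1 − 2x − e^{−2x}) / (x(1 − e^{−2x}))`. -/
noncomputable def magnusTheta (t x : ℝ) : ℝ :=
  - Real.exp (-4 * ∫ y in x..t, magnusPhi y) *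
      ((1 - 2 * x - Real.exp (-2 * x)) / (x * (1 - Real.exp (-2 * x))))

/-! The coefficient `a(t) = t(1 − e^{−2t}) / (1 − 2t − e^{−2t})` solves the linear equation
`a' = 1 + 4φa`, while `θ = Θ(·, x)` solves `θ' = −4φθ`. The two terms in `φ` cancel in the product
rule, leaving `(aθ)' = θ`. Since `Θ(x, x) = −1 / a(x)`, integrating from `x` to `t` gives the
Volterra equation. -/

theorem integral_eq_smul_sub_smul_of_hasDerivAt {E : Type*} [NormedAddCommGroup E]
    [NormedSpace ℝ E] [CompleteSpace E] {a p : ℝ → ℝ} {θ : ℝ → E} {x t : ℝ}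
    (ha : ∀ y ∈ Set.uIcc x t, HasDerivAt a (1 + p y * a y) y)
    (hθ : ∀ y ∈ Set.uIcc x t, HasDerivAt θ (-p y • θ y) y) :
    ∫ y in x..t, θ y = a t • θ t - a x • θ x := by
  have hθ_cont : ContinuousOn θ (Set.uIcc x t) := HasDerivAt.continuousOn hθ
  refine intervalIntegral.integral_eq_sub_of_hasDerivAt (f := fun y ↦ a y • θ y)
    (fun y hy ↦ ((ha y hy).fun_smul (hθ y hy)).congr_deriv ?_) hθ_cont.intervalIntegrable
  module

theorem hasDerivAt_integral_right_of_continuousOn {E : Type*} [NormedAddCommGroup E]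
    [NormedSpace ℝ E] [CompleteSpace E] {f : ℝ → E} {s : Set ℝ} {x y : ℝ}
    (hs : IsOpen s) (hf : ContinuousOn f s) (hxy : Set.uIcc x y ⊆ s) :
    HasDerivAt (fun t ↦ ∫ z in x..t, f z) (f y) y :=
  have hy : y ∈ s := hxy Set.right_mem_uIcc
  intervalIntegral.integral_hasDerivAt_right (hf.mono hxy).intervalIntegrable
    (hf.stronglyMeasurableAtFilter hs y hy) (hf.continuousAt (hs.mem_nhds hy))

theorem one_sub_exp_neg_two_mul_ne_zero {y : ℝ} (hy : y ≠ 0) : 1 - exp (-2 * y) ≠ 0 :=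
  sub_ne_zero.mpr (Ne.symm (by simpa using hy))

theorem one_sub_two_mul_sub_exp_neg_two_mul_neg {y : ℝ} (hy : y ≠ 0) :
    1 - 2 * y - exp (-2 * y) < 0 := by
  linarith [add_one_lt_exp (mul_ne_zero (by norm_num : (-2 : ℝ) ≠ 0) hy)]

/-- The coefficient `a(t) = t(1 − e^{−2t}) / (1 − 2t − e^{−2t})` of `Θ(t, x)` in the Volterra
equation. At `t = 0`, where it has a removable singularity with limit `-1`, its value is `0`. -/
noncomputable def magnusCoeff (t : ℝ) : ℝ :=
  t * (1 - exp (-2 * t)) / (1 - 2 * t - exp (-2 * t))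

theorem magnusCoeff_ne_zero {x : ℝ} (hx : x ≠ 0) : magnusCoeff x ≠ 0 :=
  div_ne_zero (mul_ne_zero hx (one_sub_exp_neg_two_mul_ne_zero hx))
    (one_sub_two_mul_sub_exp_neg_two_mul_neg hx).ne

theorem magnusTheta_eq_neg_exp_div_magnusCoeff (t x : ℝ) :
    magnusTheta t x = -exp (-4 * ∫ y in x..t, magnusPhi y) / magnusCoeff x := by
  rw [magnusTheta, magnusCoeff, div_eq_mul_inv _ (_ / _), inv_div]

theorem magnusCoeff_mul_magnusTheta_self {x : ℝ} (hx : x ≠ 0) :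
    magnusCoeff x * magnusTheta x x = -1 := by
  rw [magnusTheta_eq_neg_exp_div_magnusCoeff, mul_div_cancel₀ _ (magnusCoeff_ne_zero hx),
    intervalIntegral.integral_same, mul_zero, exp_zero]

theorem continuousOn_magnusPhi : ContinuousOn magnusPhi {0}ᶜ :=
  ContinuousOn.div (by fun_prop) (by fun_prop) fun _ hy ↦
    mul_ne_zero (one_sub_exp_neg_two_mul_ne_zero hy)
      (one_sub_two_mul_sub_exp_neg_two_mul_neg hy).ne

theorem hasDerivAt_magnusTheta {x y : ℝ} (h : 0 ∉ Set.uIcc x y) :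
    HasDerivAt (fun t ↦ magnusTheta t x) (-(4 * magnusPhi y) * magnusTheta y x) y := by
  have hφ : HasDerivAt (fun t ↦ ∫ z in x..t, magnusPhi z) (magnusPhi y) y :=
    hasDerivAt_integral_right_of_continuousOn isOpen_compl_singleton continuousOn_magnusPhi
      (Set.subset_compl_singleton_iff.mpr h)
  simp only [magnusTheta_eq_neg_exp_div_magnusCoeff]
  exact ((hφ.const_mul (-4)).exp.fun_neg.div_const (magnusCoeff x)).congr_deriv (by ring)

theorem magnusPhi_mul_magnusCoeff {y : ℝ} (hy : y ≠ 0) :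
    magnusPhi y * magnusCoeff y =
      y * (1 - y - (1 + y) * exp (-2 * y)) / (1 - 2 * y - exp (-2 * y)) ^ 2 := by
  have hN := one_sub_exp_neg_two_mul_ne_zero hy
  rw [magnusPhi, magnusCoeff, div_mul_div_comm, ← mul_div_mul_left (y * _) _ hN]
  congr 1 <;> ring

theorem hasDerivAt_magnusCoeff {y : ℝ} (hy : y ≠ 0) :
    HasDerivAt magnusCoeff (1 + 4 * magnusPhi y * magnusCoeff y) y := by
  have hD : 1 - 2 * y - exp (-2 * y) ≠ 0 := (one_sub_two_mul_sub_exp_neg_two_mul_neg hy).ne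
  have hexp : HasDerivAt (fun t ↦ exp (-2 * t)) (exp (-2 * y) * -2) y :=
    (hasDerivAt_const_mul (-2)).exp
  have hnum : HasDerivAt (fun t ↦ t * (1 - exp (-2 * t)))
      (1 - exp (-2 * y) + 2 * y * exp (-2 * y)) y :=
    ((hasDerivAt_id' y).fun_mul (hexp.const_sub 1)).congr_deriv (by ring)
  have hden : HasDerivAt (fun t ↦ 1 - 2 * t - exp (-2 * t)) (-2 * (1 - exp (-2 * y))) y :=
    (((hasDerivAt_const_mul 2).const_sub 1).fun_sub hexp).congr_deriv (by ring)
  refine (hnum.fun_div hden hD).congr_deriv ?_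
  rw [mul_assoc 4, magnusPhi_mul_magnusCoeff hy, ← mul_div_assoc, one_add_div (pow_ne_zero 2 hD)]
  ring

theorem magnusTheta_volterra_general {t x : ℝ} (h : 0 ∉ Set.uIcc x t) :
    magnusCoeff t * magnusTheta t x = (∫ y in x..t, magnusTheta y x) - 1 := by
  have hx : x ≠ 0 := ne_of_mem_of_not_mem Set.left_mem_uIcc h
  have hint : ∫ y in x..t, magnusTheta y x =
      magnusCoeff t * magnusTheta t x - magnusCoeff x * magnusTheta x x :=
    integral_eq_smul_sub_smul_of_hasDerivAt (p := fun y ↦ 4 * magnusPhi y)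
      (fun y hy ↦ hasDerivAt_magnusCoeff (ne_of_mem_of_not_mem hy h))
      (fun y hy ↦ hasDerivAt_magnusTheta (Set.notMem_subset (Set.uIcc_subset_uIcc_left hy) h))
  rw [hint, magnusCoeff_mul_magnusTheta_self hx]
  ring

/-- `Θ` satisfies the Volterra-type integral equation
`(t(1 − e^{−2t})/(1 − 2t − e^{−2t})) Θ(t,x) = ∫ₓᵗ Θ(y,x) dy − 1` for `0 < x ≤ t`. -/
theorem magnusTheta_volterra (t x : ℝ) (hx : 0 < x) (hxt : x ≤ t) :
    t * (1 - Real.exp (-2 * t)) / (1 - 2 * t - Real.exp (-2 * t)) * magnusTheta t x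
      = (∫ y in x..t, magnusTheta y x) - 1 :=
  magnusTheta_volterra_general (Set.notMem_uIcc_of_lt hx (hx.trans_le hxt))
end

section
/- Let N be a positive integer, let A⁰ and A¹ be the (N+1)×(N+1) isomerisation matrices, and let P be the (N+1)×(N+1) persymmetric identity matrix, P_{i,j} = 1 if i + j = N and 0 otherwise. Then P is an involution, P·P = I, and P conjugates the isomerisation matrices as: P·A⁰·P = A⁰ and P·A¹·P = −A¹. -/
/-- The persymmetric identity: `P_{i,j} = 1` if `i + j = N` and `0` otherwise. -/
def persymId (N : ℕ) : Matrix (Fin (N+1)) (Fin (N+1)) ℝ := fun i j =>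
  if (i : ℕ) + (j : ℕ) = N then 1 else 0

section Tridiagonal

variable {R : Type*} {n : ℕ}

/-- The tridiagonal matrix with the given bands. All three bands are indexed by the column, so
`lower` is not used at the last column and `upper` is not used at column `0`. -/
def tridiagonal [Zero R] (lower diag upper : Fin n → R) : Matrix (Fin n) (Fin n) R := fun k l =>
  if (k : ℕ) = l then diag l
  else if (k : ℕ) + 1 = l then upper l
  else if (k : ℕ) = l + 1 then lower l
  else 0

lemma tridiagonal_submatrix_rev [Zero R] (lower diag upper : Fin n → R) :
    (tridiagonal lower diag upper).submatrix Fin.rev Fin.rev =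
      tridiagonal (fun l => upper l.rev) (fun l => diag l.rev) (fun l => lower l.rev) := by
  ext k l
  have diag_iff : (k.rev : ℕ) = l.rev ↔ (k : ℕ) = l := by grind
  have upper_iff : (k.rev : ℕ) + 1 = l.rev ↔ (k : ℕ) = l + 1 := by grind
  have lower_iff : (k.rev : ℕ) = l.rev + 1 ↔ (k : ℕ) + 1 = l := by grind
  simp only [Matrix.submatrix_apply, tridiagonal, diag_iff, upper_iff, lower_iff]
  split_ifs <;> first | rfl | omega

lemma neg_tridiagonal [NegZeroClass R] (lower diag upper : Fin n → R) :
    -tridiagonal lower diag upper = tridiagonal (-lower) (-diag) (-upper) := by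
  ext k l
  simp only [Matrix.neg_apply, tridiagonal, Pi.neg_apply]
  split_ifs <;> simp only [neg_zero]

end Tridiagonal

lemma natCast_val_rev {R : Type*} [AddGroupWithOne R] {n : ℕ} (i : Fin (n + 1)) :
    ((i.rev : ℕ) : R) = n - (i : ℕ) := by
  rw [eq_sub_iff_add_eq, ← Nat.cast_add, Nat.add_comm, Fin.add_rev_cast]

lemma isoA0_eq_tridiagonal (N : ℕ) :
    isoA0 N = tridiagonal (fun l => (N : ℝ) - (l : ℕ)) (fun _ => -(N : ℝ)) (fun l => (l : ℕ)) :=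
  rfl

lemma isoA1_eq_tridiagonal (N : ℕ) :
    isoA1 N =
      tridiagonal (fun l => -(N : ℝ) + (l : ℕ)) (fun l => (N : ℝ) - 2 * (l : ℕ))
        (fun l => (l : ℕ)) :=
  rfl

lemma isoA0_submatrix_rev (N : ℕ) : (isoA0 N).submatrix Fin.rev Fin.rev = isoA0 N := by
  have upper_rev (l : Fin (N + 1)) : ((l.rev : ℕ) : ℝ) = N - (l : ℕ) := natCast_val_rev l
  have lower_rev (l : Fin (N + 1)) : (N : ℝ) - (l.rev : ℕ) = (l : ℕ) := by
    rw [natCast_val_rev, sub_sub_cancel]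
  rw [isoA0_eq_tridiagonal, tridiagonal_submatrix_rev]
  exact congrArg₂ (tridiagonal · _ ·) (funext upper_rev) (funext lower_rev)

lemma isoA1_submatrix_rev (N : ℕ) : (isoA1 N).submatrix Fin.rev Fin.rev = -isoA1 N := by
  have upper_rev (l : Fin (N + 1)) : ((l.rev : ℕ) : ℝ) = -(-(N : ℝ) + (l : ℕ)) := by
    rw [natCast_val_rev, neg_add', neg_neg]
  have diag_rev (l : Fin (N + 1)) :
      (N : ℝ) - 2 * (l.rev : ℕ) = -((N : ℝ) - 2 * (l : ℕ)) := by
    rw [natCast_val_rev]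
    ring
  have lower_rev (l : Fin (N + 1)) : -(N : ℝ) + (l.rev : ℕ) = -((l : ℕ) : ℝ) := by
    rw [natCast_val_rev]
    ring
  rw [isoA1_eq_tridiagonal, tridiagonal_submatrix_rev, neg_tridiagonal]
  exact congr (congrArg₂ tridiagonal (funext upper_rev) (funext diag_rev)) (funext lower_rev)

lemma persymId_eq_permMatrix (N : ℕ) : persymId N = Fin.revPerm.permMatrix ℝ := by
  ext i j
  have add_eq_iff : (i : ℕ) + j = N ↔ i.rev = j := by grind
  simp [persymId, PEquiv.toMatrix_apply, Equiv.toPEquiv_apply, add_eq_iff, eq_comm]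

lemma persymId_mul_mul_persymId (N : ℕ) (M : Matrix (Fin (N + 1)) (Fin (N + 1)) ℝ) :
    persymId N * M * persymId N = M.submatrix Fin.rev Fin.rev := by
  rw [persymId_eq_permMatrix, PEquiv.toMatrix_toPEquiv_mul, PEquiv.mul_toMatrix_toPEquiv,
    Matrix.submatrix_submatrix]
  rfl

lemma persymId_mul_self (N : ℕ) : persymId N * persymId N = 1 := by
  calc persymId N * persymId N = persymId N * 1 * persymId N := by rw [mul_one]
    _ = (1 : Matrix _ _ ℝ).submatrix Fin.rev Fin.rev := persymId_mul_mul_persymId N 1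
    _ = 1 := Matrix.submatrix_one Fin.rev Fin.rev_injective

/-- The persymmetric identity is an involution conjugating `A⁰` to itself
and `A¹` to `−A¹`. -/
theorem persymId_conj_iso (N : ℕ) (hN : 0 < N) :
    persymId N * persymId N = 1 ∧
    persymId N * isoA0 N * persymId N = isoA0 N ∧
    persymId N * isoA1 N * persymId N = -isoA1 N := by
  refine ⟨persymId_mul_self N, ?_, ?_⟩
  · rw [persymId_mul_mul_persymId, isoA0_submatrix_rev]
  · rw [persymId_mul_mul_persymId, isoA1_submatrix_rev]
end

section
/- Let N be a positive integer and let A⁰ be the (N+1)×(N+1) isomerisation matrix. For each r with 0 ≤ r ≤ N, define the vector v⁽ʳ⁾ ∈ ℝ^{N+1} whose m-th entry (0 ≤ m ≤ N) is the coefficient of X^m in the polynomial (1+X)^{N−r}(1−X)^r; equivalently v⁽ʳ⁾_m = Σ_j (−1)^j C(r,j) C(N−r, m−j). Then v⁽ʳ⁾ is nonzero and A⁰ · v⁽ʳ⁾ = −2r · v⁽ʳ⁾, i.e., v⁽ʳ⁾ is an eigenvector of A⁰ with eigenvalue −2r. -/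
/-!
On polynomials of degree at most `N`, written in the monomial basis, `A⁰` is the matrix of the
differential operator `L_N P = (1 - X²) P' - N (1 - X) P`. These operators satisfy the Leibniz rule
`L_{m+n} (P Q) = (L_m P) Q + P (L_n Q)`, so eigenvalues add under multiplication of eigenvectors.
Since `L_1 (1 + X) = 0` and `L_1 (1 - X) = -2 (1 - X)`, the product `(1 + X)^(N-r) (1 - X)^r` is an
eigenvector of `L_N` with eigenvalue `-2r`.
-/

open Polynomial

/-- The vector `v⁽ʳ⁾ ∈ ℝ^{N+1}` whose `m`-th entry is the coefficient of `X^m`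
in `(1+X)^{N−r}(1−X)^r`. -/
noncomputable def isoEigvec (N r : ℕ) : Fin (N+1) → ℝ := fun m =>
  (((1 + X) ^ (N - r) * (1 - X) ^ r : Polynomial ℝ)).coeff (m : ℕ)

section IsoOperator

variable {R : Type*} [CommRing R]

variable (R) in
/-- The differential operator `L_N P = (1 - X²) P' - N (1 - X) P` through which the isomerisation
matrix `A⁰` acts on generating polynomials. It is defined on all of `R[X]`, but it preserves the
polynomials of degree at most `N`, and it is on these that it corresponds to `A⁰`. -/
noncomputable def isoOperator (N : ℕ) : R[X] →ₗ[R] R[X] :=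
  LinearMap.mulLeft R (1 - X ^ 2) ∘ₗ derivative - LinearMap.mulLeft R ((N : R[X]) * (1 - X))

lemma isoOperator_apply (N : ℕ) (P : R[X]) :
    isoOperator R N P = (1 - X ^ 2) * derivative P - (N : R[X]) * (1 - X) * P :=
  rfl

lemma isoOperator_mul (m n : ℕ) (P Q : R[X]) :
    isoOperator R (m + n) (P * Q) = isoOperator R m P * Q + P * isoOperator R n Q := by
  simp only [isoOperator_apply, derivative_mul, Nat.cast_add]
  ring

lemma isoOperator_mul_of_eigen {m n : ℕ} {P Q : R[X]} {a b : R}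
    (hP : isoOperator R m P = a • P) (hQ : isoOperator R n Q = b • Q) :
    isoOperator R (m + n) (P * Q) = (a + b) • (P * Q) := by
  rw [isoOperator_mul, hP, hQ, smul_mul_assoc, mul_smul_comm, add_smul]

lemma isoOperator_pow_of_eigen {m : ℕ} {P : R[X]} {a : R} (hP : isoOperator R m P = a • P)
    (n : ℕ) : isoOperator R (n * m) (P ^ n) = (n * a) • P ^ n := by
  induction n with
  | zero => simp [isoOperator_apply]
  | succ n ih =>
    rw [pow_succ, Nat.succ_mul, isoOperator_mul_of_eigen ih hP, Nat.cast_succ, add_one_mul]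

lemma isoOperator_one_add_X : isoOperator R 1 (1 + X) = (0 : R) • (1 + X) := by
  simp only [isoOperator_apply, derivative_add, derivative_one, derivative_X, Nat.cast_one,
    zero_smul]
  ring

lemma isoOperator_one_sub_X : isoOperator R 1 (1 - X) = (-2 : R) • (1 - X) := by
  simp only [isoOperator_apply, derivative_sub, derivative_one, derivative_X, Nat.cast_one,
    smul_eq_C_mul, map_neg, map_ofNat]
  ring

lemma isoOperator_one_add_X_pow_mul_one_sub_X_pow (m n : ℕ) :
    isoOperator R (m + n) ((1 + X) ^ m * (1 - X) ^ n) =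
      (-2 * (n : R)) • ((1 + X) ^ m * (1 - X) ^ n) := by
  have hadd := isoOperator_pow_of_eigen (isoOperator_one_add_X (R := R)) m
  have hsub := isoOperator_pow_of_eigen (isoOperator_one_sub_X (R := R)) n
  rw [mul_one] at hadd hsub
  rw [isoOperator_mul_of_eigen hadd hsub, mul_zero, zero_add, mul_comm]

-- At `l = 0` the truncated exponent `l - 1` is harmless: its coefficient vanishes.
lemma isoOperator_X_pow (N l : ℕ) :
    isoOperator R N (X ^ l) =
      C (l : R) * X ^ (l - 1) - C (N : R) * X ^ l + C ((N : R) - l) * X ^ (l + 1) := by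
  rw [isoOperator_apply, derivative_X_pow]
  cases l with
  | zero =>
    simp only [Nat.cast_zero, map_zero, zero_mul, sub_zero, map_natCast]
    ring
  | succ l =>
    simp only [Nat.add_sub_cancel, map_sub, map_natCast]
    ring

end IsoOperator

lemma isoA0_apply_eq_coeff_isoOperator {N : ℕ} (k l : Fin (N + 1)) :
    isoA0 N k l = (isoOperator ℝ N (X ^ (l : ℕ))).coeff k := by
  obtain ⟨k, -⟩ := k
  obtain ⟨l, -⟩ := l
  simp only [isoA0, isoOperator_X_pow, coeff_add, coeff_sub, coeff_C_mul_X_pow]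
  rcases l with _ | l <;> grind

lemma isoA0_mulVec_toFn {N : ℕ} {P : ℝ[X]} (hP : P.natDegree ≤ N) :
    (isoA0 N).mulVec (toFn (N + 1) P) = toFn (N + 1) (isoOperator ℝ N P) := by
  ext k
  have hsum : P = ∑ l : Fin (N + 1), P.coeff l • X ^ (l : ℕ) := by
    simpa only [smul_eq_C_mul, Fin.sum_univ_eq_sum_range (fun l => C (P.coeff l) * X ^ l)]
      using P.as_sum_range_C_mul_X_pow' (Nat.lt_succ_of_le hP)
  calc (isoA0 N).mulVec (toFn (N + 1) P) k
      = ∑ l : Fin (N + 1), P.coeff l * (isoOperator ℝ N (X ^ (l : ℕ))).coeff k := by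
        simp only [Matrix.mulVec, dotProduct, isoA0_apply_eq_coeff_isoOperator, toFn,
          LinearMap.pi_apply, lcoeff_apply, mul_comm]
    _ = (isoOperator ℝ N (∑ l : Fin (N + 1), P.coeff l • X ^ (l : ℕ))).coeff k := by
        simp only [map_sum, map_smul, finsetSum_coeff, coeff_smul, smul_eq_mul]
    _ = (isoOperator ℝ N P).coeff k := by rw [← hsum]

lemma isoEigvec_eq_toFn (N r : ℕ) :
    isoEigvec N r = toFn (N + 1) ((1 + X) ^ (N - r) * (1 - X) ^ r) :=
  rfl

lemma isoEigvec_apply_zero (N r : ℕ) : isoEigvec N r 0 = 1 := by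
  simp [isoEigvec, coeff_zero_eq_eval_zero]

/-- `v⁽ʳ⁾` is a (nonzero) eigenvector of `A⁰` with eigenvalue `−2r`. -/
theorem isoA0_eigenvector (N : ℕ) (hN : 0 < N) (r : ℕ) (hr : r ≤ N) :
    isoEigvec N r ≠ 0 ∧
    (isoA0 N).mulVec (isoEigvec N r) = (-2 * (r : ℝ)) • isoEigvec N r := by
  refine ⟨fun h => one_ne_zero ((isoEigvec_apply_zero N r).symm.trans (congrFun h 0)), ?_⟩
  have hdeg : ((1 + X) ^ (N - r) * (1 - X) ^ r : ℝ[X]).natDegree ≤ N := by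
    compute_degree
    omega
  have heigen := isoOperator_one_add_X_pow_mul_one_sub_X_pow (R := ℝ) (N - r) r
  rw [Nat.sub_add_cancel hr] at heigen
  rw [isoEigvec_eq_toFn, isoA0_mulVec_toFn hdeg, heigen, map_smul]
end

section
/- Let N be a positive integer and let V be the (N+1)×(N+1) real matrix whose (m,r) entry (0 ≤ m,r ≤ N) is the coefficient of X^m in the polynomial (1+X)^{N−r}(1−X)^r, i.e., V_{m,r} = Σ_j (−1)^j C(r,j) C(N−r, m−j). Then V² = 2^N · I, and consequently V⁻¹ = 2^{−N} · V. -/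
open Polynomial

/-- The eigenvector matrix `V`: `V_{m,r}` is the coefficient of `X^m` in
`(1+X)^{N−r}(1−X)^r`. -/
noncomputable def isoV (N : ℕ) : Matrix (Fin (N+1)) (Fin (N+1)) ℝ := fun m r =>
  (((1 + X) ^ (N - (r : ℕ)) * (1 - X) ^ (r : ℕ) : Polynomial ℝ)).coeff (m : ℕ)

/-!
A `2 × 2` matrix `g` acts on binary forms of degree `N` by linear substitution. In the monomial
basis this is the `N`-th symmetric power of `g`; composing substitutions shows that it is
multiplicative in `g`, and it sends the scalar `c` to the scalar `c ^ N`. The matrix `V` is the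
symmetric power of `H = !![1, 1; 1, -1]`, so `V² = 2^N · I` comes from `H² = 2 · I`.
-/

section CommSemiring

variable {R : Type*} [CommSemiring R]

lemma aeval_homogenize_eq_sum {A : Type*} [CommSemiring A] [Algebra R A] (p : R[X]) (N : ℕ)
    (x : Fin 2 → A) :
    MvPolynomial.aeval x (p.homogenize N) =
      ∑ k : Fin (N + 1), p.coeff k • (x 0 ^ (k : ℕ) * x 1 ^ (N - k : ℕ)) := by
  simp [homogenize, Finset.Nat.sum_antidiagonal_eq_sum_range_succ_mk, Finset.sum_range,
    MvPolynomial.aeval_monomial, Finsupp.prod_fintype, Fin.prod_univ_two, Algebra.smul_def]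

/-- The linear polynomial with coefficients the `j`-th column of `g`: the image, dehomogenized, of
the `j`-th variable under the linear substitution given by `g`. -/
noncomputable def colPoly (g : Matrix (Fin 2) (Fin 2) R) (j : Fin 2) : R[X] :=
  C (g 0 j) + C (g 1 j) * X

lemma colPoly_mul (g h : Matrix (Fin 2) (Fin 2) R) (j : Fin 2) :
    colPoly (g * h) j = C (h 0 j) * colPoly g 0 + C (h 1 j) * colPoly g 1 := by
  simp only [colPoly, Matrix.mul_apply, Fin.sum_univ_two, C_add, C_mul]
  ring

-- `homogenize` uses `X 0` for the polynomial variable and `X 1` for the homogenizing one, so the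
-- order of the variables is opposite to that of the rows of `g`.
lemma homogenize_colPoly_pow_mul_pow (g : Matrix (Fin 2) (Fin 2) R) {N r : ℕ} (hr : r ≤ N) :
    (colPoly g 0 ^ (N - r) * colPoly g 1 ^ r).homogenize N =
      (.C (g 0 0) * .X 1 + .C (g 1 0) * .X 0) ^ (N - r) *
        (.C (g 0 1) * .X 1 + .C (g 1 1) * .X 0) ^ r := by
  have isHomogeneous_linearForm (a b : R) :
      (.C a * .X 1 + .C b * .X 0 : MvPolynomial (Fin 2) R).IsHomogeneous 1 :=
    (MvPolynomial.isHomogeneous_C_mul_X a 1).add (MvPolynomial.isHomogeneous_C_mul_X b 0)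
  apply homogenize_eq_of_isHomogeneous
  · simpa only [one_mul, Nat.sub_add_cancel hr] using
      ((isHomogeneous_linearForm _ _).pow (N - r)).mul ((isHomogeneous_linearForm _ _).pow r)
  · simp [colPoly]

/-- The `N`-th symmetric power of a `2 × 2` matrix `g`, in the basis `x ^ (N - r) * y ^ r` of
binary forms. Forms are encoded by their dehomogenization `x = 1`, `y = X`. -/
noncomputable def symPowMatrix (N : ℕ) (g : Matrix (Fin 2) (Fin 2) R) :
    Matrix (Fin (N + 1)) (Fin (N + 1)) R :=
  .of fun m r => (colPoly g 0 ^ (N - r : ℕ) * colPoly g 1 ^ (r : ℕ)).coeff m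

theorem symPowMatrix_mul (N : ℕ) (g h : Matrix (Fin 2) (Fin 2) R) :
    symPowMatrix N (g * h) = symPowMatrix N g * symPowMatrix N h := by
  ext m r
  set p := colPoly h 0 ^ (N - r : ℕ) * colPoly h 1 ^ (r : ℕ)
  have substitution : colPoly (g * h) 0 ^ (N - r : ℕ) * colPoly (g * h) 1 ^ (r : ℕ) =
      ∑ k : Fin (N + 1), p.coeff k • (colPoly g 1 ^ (k : ℕ) * colPoly g 0 ^ (N - k : ℕ)) := by
    calc
      colPoly (g * h) 0 ^ (N - r : ℕ) * colPoly (g * h) 1 ^ (r : ℕ)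
      _ = MvPolynomial.aeval ![colPoly g 1, colPoly g 0] (p.homogenize N) := by
        simp [p, homogenize_colPoly_pow_mul_pow h r.is_le, colPoly_mul]
      _ = _ := aeval_homogenize_eq_sum p N _
  simp only [symPowMatrix, Matrix.of_apply, Matrix.mul_apply, substitution, finsetSum_coeff,
    coeff_smul, smul_eq_mul]
  exact Finset.sum_congr rfl fun k _ => by rw [mul_comm, mul_comm (colPoly g 1 ^ _)]

theorem symPowMatrix_smul_one (N : ℕ) (c : R) :
    symPowMatrix N (c • (1 : Matrix (Fin 2) (Fin 2) R)) = c ^ N • 1 := by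
  ext m r
  have column_eq : (C c ^ (N - r : ℕ) * (C c * X) ^ (r : ℕ) : R[X]) = C (c ^ N) * X ^ (r : ℕ) := by
    rw [mul_pow, ← mul_assoc, pow_sub_mul_pow _ r.is_le, C_pow]
  simp [symPowMatrix, colPoly, column_eq, -map_pow, coeff_X_pow, Matrix.one_apply, Fin.ext_iff]

theorem symPowMatrix_mul_self {g : Matrix (Fin 2) (Fin 2) R} {c : R} (hg : g * g = c • 1)
    (N : ℕ) : symPowMatrix N g * symPowMatrix N g = c ^ N • 1 := by
  rw [← symPowMatrix_mul, hg, symPowMatrix_smul_one]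

end CommSemiring

section CommRing

variable {R : Type*} [CommRing R]

theorem symPowMatrix_inv {g : Matrix (Fin 2) (Fin 2) R} {c : R} [Invertible c]
    (hg : g * g = c • 1) (N : ℕ) : (symPowMatrix N g)⁻¹ = ⅟c ^ N • symPowMatrix N g := by
  apply Matrix.inv_eq_right_inv
  rw [Matrix.mul_smul, symPowMatrix_mul_self hg, smul_smul, ← mul_pow, invOf_mul_self, one_pow,
    one_smul]

variable (R) in
/-- The Hadamard matrix of order `2`, whose symmetric powers are the matrices `V`. -/
def hadamardTwo : Matrix (Fin 2) (Fin 2) R := !![1, 1; 1, -1]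

lemma hadamardTwo_mul_self : hadamardTwo R * hadamardTwo R = (2 : R) • 1 := by
  ext i j
  fin_cases i <;> fin_cases j <;> simp [hadamardTwo, one_add_one_eq_two]

theorem isoV_sq_general [Invertible (2 : R)] (N : ℕ) :
    symPowMatrix N (hadamardTwo R) * symPowMatrix N (hadamardTwo R) = (2 : R) ^ N • 1 ∧
    (symPowMatrix N (hadamardTwo R))⁻¹ = ⅟(2 : R) ^ N • symPowMatrix N (hadamardTwo R) :=
  ⟨symPowMatrix_mul_self hadamardTwo_mul_self N, symPowMatrix_inv hadamardTwo_mul_self N⟩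

end CommRing

lemma isoV_eq_symPowMatrix (N : ℕ) : isoV N = symPowMatrix N (hadamardTwo ℝ) := by
  ext m r
  simp [isoV, symPowMatrix, colPoly, hadamardTwo, sub_eq_add_neg]

/-- `V² = 2^N · I`, hence `V⁻¹ = 2^{−N} · V`. -/
theorem isoV_sq (N : ℕ) (hN : 0 < N) :
    isoV N * isoV N = ((2 : ℝ) ^ N) • (1 : Matrix (Fin (N+1)) (Fin (N+1)) ℝ) ∧
    (isoV N)⁻¹ = ((2 : ℝ) ^ N)⁻¹ • isoV N := by
  simpa only [isoV_eq_symPowMatrix, invOf_eq_inv, inv_pow] using isoV_sq_general (R := ℝ) N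
end

section
/- Let N be a positive integer and let A¹ be the (N+1)×(N+1) isomerisation matrix. Then A¹ is nilpotent; in particular (A¹)^{N+1} = 0, and every eigenvalue of A¹ is zero. -/
/-!
In the monomial basis of the polynomials of degree at most `N`, `A¹` is the matrix of the
differential operator `p ↦ (X - 1)² dp/dX - N (X - 1) p`. This operator raises the order of
vanishing at `1`, so its `(N + 1)`-st iterate sends a polynomial of degree at most `N` to another
such polynomial that is divisible by `(X - 1)^(N + 1)`, hence to zero.
-/

open Polynomial

theorem pow_succ_dvd_sq_mul_derivative_sub {R : Type*} [CommRing R] {k : ℕ} {q p : R[X]}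
    (hp : q ^ k ∣ p) (r : R[X]) : q ^ (k + 1) ∣ q ^ 2 * derivative p - r * q * p := by
  have h_derivative : q ^ (k + 1) ∣ q ^ 2 * derivative p :=
    calc q ^ (k + 1) ∣ q ^ (2 + (k - 1)) := pow_dvd_pow q (by lia)
      _ = q ^ 2 * q ^ (k - 1) := pow_add q 2 (k - 1)
      _ ∣ q ^ 2 * derivative p := mul_dvd_mul_left _ (pow_sub_one_dvd_derivative_of_pow_dvd hp)
  have h_mul : q ^ (k + 1) ∣ r * q * p := by
    rw [pow_succ', mul_assoc]
    exact (mul_dvd_mul_left q hp).mul_left r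
  exact dvd_sub h_derivative h_mul

theorem eq_zero_of_X_sub_C_pow_dvd_of_mem_degreeLT {R : Type*} [CommRing R] {n : ℕ} {a : R}
    {p : R[X]} (h_dvd : (X - C a) ^ n ∣ p) (hp : p ∈ degreeLT R n) : p = 0 := by
  nontriviality R
  have h_monic : ((X - C a) ^ n).Monic := (monic_X_sub_C a).pow n
  have h_degree : ((X - C a) ^ n).degree = (n : WithBot ℕ) := by
    rw [degree_eq_natDegree h_monic.ne_zero, (monic_X_sub_C a).natDegree_pow, natDegree_X_sub_C,
      mul_one]
  by_contra h_ne
  exact h_monic.not_dvd_of_degree_lt h_ne (h_degree ▸ mem_degreeLT.mp hp) h_dvd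

/-- The differential operator `p ↦ (X - 1)² dp/dX - c (X - 1) p`; for `c = N` it represents `A¹`
in the monomial basis. -/
noncomputable def isoOp {R : Type*} [CommRing R] (c : R) : R[X] →ₗ[R] R[X] :=
  LinearMap.mulLeft R ((X - 1) ^ 2) ∘ₗ derivative - LinearMap.mulLeft R (C c * (X - 1))

namespace isoOp

variable {R : Type*} [CommRing R]

theorem apply_eq (c : R) (p : R[X]) :
    isoOp c p = (X - 1) ^ 2 * derivative p - C c * (X - 1) * p := rfl

theorem pow_dvd_pow_apply (c : R) (k : ℕ) (p : R[X]) : (X - 1) ^ k ∣ (isoOp c ^ k) p := by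
  induction k with
  | zero => simp
  | succ k ih =>
    rw [pow_succ' (isoOp c), Module.End.mul_apply, apply_eq]
    exact pow_succ_dvd_sq_mul_derivative_sub ih (C c)

theorem apply_eq_expanded (c : R) (p : R[X]) :
    isoOp c p = X * (X * derivative p) - 2 * (X * derivative p) + derivative p
      - C c * (X * p) + C c * p := by
  rw [apply_eq]
  ring

theorem coeff_zero (c : R) (p : R[X]) : (isoOp c p).coeff 0 = c * p.coeff 0 + p.coeff 1 := by
  simp [apply_eq_expanded, mul_coeff_zero, coeff_derivative, add_comm]

theorem coeff_succ (c : R) (p : R[X]) (m : ℕ) :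
    (isoOp c p).coeff (m + 1) =
      (m - c) * p.coeff m + (c - 2 * (m + 1)) * p.coeff (m + 1) + (m + 2) * p.coeff (m + 2) := by
  have h_euler (n : ℕ) : (X * derivative p).coeff n = n * p.coeff n := by
    cases n <;> simp [coeff_derivative, mul_comm]
  simp only [apply_eq_expanded, coeff_add, coeff_sub, coeff_C_mul, coeff_ofNat_mul, coeff_X_mul,
    h_euler, coeff_derivative]
  push_cast
  ring

theorem mapsTo_degreeLT (N : ℕ) {p : R[X]} (hp : p ∈ degreeLT R (N + 1)) :
    isoOp (N : R) p ∈ degreeLT R (N + 1) := by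
  rw [mem_degreeLT, degree_lt_iff_coeff_zero] at hp ⊢
  intro m hm
  obtain ⟨m, rfl⟩ := Nat.exists_eq_add_one_of_ne_zero (show m ≠ 0 by lia)
  rw [coeff_succ, hp (m + 1) hm, hp (m + 2) (by lia)]
  rcases (show N = m ∨ N + 1 ≤ m by lia) with rfl | h
  · simp
  · simp [hp m h]

end isoOp

/-- The restriction of `isoOp N` to the polynomials of degree at most `N`. They form an invariant
submodule because the factor `m - N` in `isoOp.coeff_succ` vanishes at `m = N`. -/
noncomputable def isoOpDegreeLT (R : Type*) [CommRing R] (N : ℕ) :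
    Module.End R (degreeLT R (N + 1)) :=
  (isoOp (N : R)).restrict fun _ => isoOp.mapsTo_degreeLT N

theorem isoOpDegreeLT_pow_eq_zero (R : Type*) [CommRing R] (N : ℕ) :
    isoOpDegreeLT R N ^ (N + 1) = 0 := by
  ext1 p
  have h_dvd : (X - C 1) ^ (N + 1) ∣ ((isoOpDegreeLT R N ^ (N + 1)) p).1 := by
    rw [C_1, isoOpDegreeLT, Module.End.pow_restrict]
    exact isoOp.pow_dvd_pow_apply (N : R) (N + 1) p
  exact Subtype.ext (eq_zero_of_X_sub_C_pow_dvd_of_mem_degreeLT h_dvd (Subtype.property _))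

theorem toMatrix_isoOpDegreeLT (N : ℕ) :
    LinearMap.toMatrix (degreeLT.basis ℝ (N + 1)) (degreeLT.basis ℝ (N + 1)) (isoOpDegreeLT ℝ N) =
      isoA1 N := by
  ext ⟨k, hk⟩ ⟨l, hl⟩
  rw [LinearMap.toMatrix_apply, degreeLT.basis_repr, isoOpDegreeLT, LinearMap.coe_restrict_apply,
    degreeLT.basis_val]
  cases k with
  | zero =>
    rw [isoOp.coeff_zero]
    simp only [isoA1, coeff_X_pow]
    split_ifs <;> first | lia | (subst_vars; push_cast; ring)
  | succ k =>
    rw [isoOp.coeff_succ]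
    simp only [isoA1, coeff_X_pow]
    split_ifs <;> first | lia | (subst_vars; push_cast; ring)

theorem isoA1_pow_eq_zero (N : ℕ) : isoA1 N ^ (N + 1) = 0 := by
  rw [← toMatrix_isoOpDegreeLT, LinearMap.toMatrix_pow, isoOpDegreeLT_pow_eq_zero, map_zero]

theorem eq_zero_of_isNilpotent_of_mulVec_eq_smul {n R : Type*} [Fintype n] [DecidableEq n]
    [CommRing R] [IsDomain R] {A : Matrix n n R} (hA : IsNilpotent A) {μ : R} {v : n → R}
    (hv : v ≠ 0) (h : A.mulVec v = μ • v) : μ = 0 := by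
  have h_eigen : Module.End.HasEigenvector (Matrix.toLinAlgEquiv' A) μ v :=
    Module.End.hasEigenvector_iff.mpr ⟨Module.End.mem_eigenspace_iff.mpr h, hv⟩
  exact ((Module.End.hasEigenvalue_of_hasEigenvector h_eigen).isNilpotent_of_isNilpotent
    (hA.map Matrix.toLinAlgEquiv')).eq_zero

/-- `A¹` is nilpotent, in particular `(A¹)^{N+1} = 0`, and every eigenvalue of
`A¹` (over ℂ) is zero. -/
theorem isoA1_nilpotent (N : ℕ) (hN : 0 < N) :
    IsNilpotent (isoA1 N) ∧
    isoA1 N ^ (N + 1) = 0 ∧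
    ∀ lam : ℂ, (∃ v : Fin (N+1) → ℂ, v ≠ 0 ∧
        ((isoA1 N).map (algebraMap ℝ ℂ)).mulVec v = lam • v) → lam = 0 := by
  have h_nilpotent : IsNilpotent (isoA1 N) := ⟨N + 1, isoA1_pow_eq_zero N⟩
  refine ⟨h_nilpotent, isoA1_pow_eq_zero N, ?_⟩
  rintro lam ⟨v, hv, h_eigen⟩
  exact eq_zero_of_isNilpotent_of_mulVec_eq_smul
    (h_nilpotent.map (algebraMap ℝ ℂ).mapMatrix) hv h_eigen
end

section
/- Let A and B be n×n real matrices and let a, b be real numbers with b ≠ 0, such that B·A − A·B = a·A + b·B. Then for every nonnegative integer m, B·A^m = (A + b·I)^m · B − (a/b) · A · ( A^m − (A + b·I)^m ). -/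
/-!
Put `C = A + b • 1` and `D = B + c • A`, where `c = a / b`. The commutator relation says exactly
that `D * A = C * D`, so `D * A ^ m = C ^ m * D` for all `m`. Expanding `D` and using that `A`
commutes with `C` gives the formula.
-/

theorem mul_pow_eq_of_semiconjBy_add {R : Type*} [Ring R] {A B C X : R}
    (hBX : SemiconjBy (B + X) A C) (hX : Commute X C) (m : ℕ) :
    B * A ^ m = C ^ m * B - X * (A ^ m - C ^ m) :=
  calc
    B * A ^ m = (B + X) * A ^ m - X * A ^ m := by rw [add_mul, add_sub_cancel_right]
    _ = C ^ m * (B + X) - X * A ^ m := by rw [(hBX.pow_right m).eq]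
    _ = C ^ m * B + X * C ^ m - X * A ^ m := by rw [mul_add, (hX.pow_right m).eq]
    _ = C ^ m * B - X * (A ^ m - C ^ m) := by rw [mul_sub]; abel

section Algebra

variable {K R : Type*} [CommSemiring K] [Ring R] [Algebra K R] {A B : R} {b c : K}

theorem semiconjBy_add_smul_iff_commutator_eq :
    SemiconjBy (B + c • A) A (A + b • 1) ↔ B * A - A * B = (c * b) • A + b • B := by
  have hleft : (B + c • A) * A = B * A + c • (A * A) := by rw [add_mul, smul_mul_assoc]
  have hright : (A + b • 1) * (B + c • A) =
      (c * b) • A + b • B + A * B + c • (A * A) := by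
    simp only [add_mul, mul_add, smul_mul_assoc, mul_smul_comm, one_mul, smul_smul, mul_comm c b,
      smul_add]
    abel
  rw [SemiconjBy, hleft, hright, add_left_inj, sub_eq_iff_eq_add]

theorem mul_pow_of_commutator_general (h : B * A - A * B = (c * b) • A + b • B) (m : ℕ) :
    B * A ^ m = (A + b • 1) ^ m * B - c • (A * (A ^ m - (A + b • 1) ^ m)) := by
  have hcomm : Commute (c • A) (A + b • 1) :=
    ((Commute.refl A).add_right ((Commute.one_right A).smul_right b)).smul_left c
  rw [← smul_mul_assoc]
  exact mul_pow_eq_of_semiconjBy_add (semiconjBy_add_smul_iff_commutator_eq.mpr h) hcomm m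

end Algebra

/-- If `BA − AB = aA + bB` with `b ≠ 0`, then
`B·A^m = (A + bI)^m·B − (a/b)·A·(A^m − (A + bI)^m)` for every `m ≥ 0`. -/
theorem mul_pow_of_commutator (n : ℕ) (A B : Matrix (Fin n) (Fin n) ℝ) (a b : ℝ)
    (hb : b ≠ 0) (h : B * A - A * B = a • A + b • B) (m : ℕ) :
    B * A ^ m
      = (A + b • (1 : Matrix (Fin n) (Fin n) ℝ)) ^ m * B
        - (a / b) • (A * (A ^ m - (A + b • (1 : Matrix (Fin n) (Fin n) ℝ)) ^ m)) :=
  mul_pow_of_commutator_general (by rwa [div_mul_cancel₀ a hb]) m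
end
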